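/- For every natural number n ≥ 1 and every complex number z with Re z > n, Kurepa's function satisfies K(z) = K(z − n) + (P_n(z) − 1) · Γ(z − n), where P_n(z) = 1 + Σ_{j=0}^{n−1} Π_{i=0}^{j} (z − n + i) and Γ is the complex Gamma function. -/

import Mathlib

open MeasureTheory Set

/-- Kurepa's function `K(z) = ∫₀^∞ e^{-t} (t^z - 1)/(t - 1) dt`,
where `t^z = exp(z log t)` for `t > 0`. -/
noncomputable def kurepa (z : ℂ) : ℂ :=
  ∫ t in Ioi (0 : ℝ), (Real.exp (-t) : ℂ) * (((t : ℂ) ^ z - 1) / ((t : ℂ) - 1))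

/-- The polynomial `P n z = 1 + ∑_{j=0}^{n-1} ∏_{i=0}^{j} (z - n + i)`. -/
noncomputable def kurepaP (n : ℕ) (z : ℂ) : ℂ :=
  1 + ∑ j ∈ Finset.range n, ∏ i ∈ Finset.range (j + 1), (z - (n : ℂ) + (i : ℂ))

/-!
In `K(w + 1) - K(w)` the two integrands differ by `e^{-t} t^w (t - 1)/(t - 1) = e^{-t} t^w`, so
`K(w + 1) = K(w) + Γ(w + 1)`; summing over `w, w + 1, …, w + n - 1` and expressing each
`Γ(w + j + 1)` as a rising factorial times `Γ(w)` gives the identity at `w = z - n`. The integral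
defining `K(w)` converges as soon as `Re w > -1`: at `t = 1` the numerator vanishes to first order.
-/

open Asymptotics Filter Topology

theorem integrable_inv_sub_smul_of_isBigO {𝕜 E : Type*} [RCLike 𝕜] [NormedAddCommGroup E]
    [NormedSpace 𝕜 E] {μ : Measure 𝕜} [IsLocallyFiniteMeasure μ] {f : 𝕜 → E} {a : 𝕜}
    (hf : Integrable f μ) (hfa : f =O[𝓝 a] fun t => t - a) :
    Integrable (fun t => (t - a)⁻¹ • f t) μ := by
  have hmeas : Measurable fun t : 𝕜 => (t - a)⁻¹ := by fun_prop
  have near : IntegrableAtFilter (fun t => (t - a)⁻¹ • f t) (𝓝 a) μ := by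
    obtain ⟨C, hC, hbound⟩ := hfa.exists_nonneg
    refine (μ.finiteAt_nhds a).integrableAtFilter
      ⟨univ, univ_mem, (hmeas.aestronglyMeasurable.smul hf.1).restrict⟩
      (isBoundedUnder_of_eventually_le (a := C) ?_)
    filter_upwards [hbound.bound] with t ht
    rw [Function.comp_apply, norm_smul, norm_inv, inv_mul_eq_div]
    exact div_le_of_le_mul₀ (norm_nonneg _) hC ht
  obtain ⟨U, hU, hfU⟩ := near
  obtain ⟨ε, hε, hball⟩ := Metric.mem_nhds_iff.1 hU
  have away : IntegrableOn (fun t => (t - a)⁻¹ • f t) (Metric.ball a ε)ᶜ μ := by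
    refine hf.integrableOn.bdd_smul ε⁻¹ hmeas.aestronglyMeasurable
      (ae_restrict_of_forall_mem Metric.isOpen_ball.measurableSet.compl fun t ht => ?_)
    rw [norm_inv]
    exact inv_anti₀ hε (by simpa [dist_eq_norm] using ht)
  rw [← integrableOn_univ, ← union_compl_self (Metric.ball a ε)]
  exact (hfU.mono_set hball).union away

theorem integrableOn_exp_neg_mul_cpow {w : ℂ} (hw : -1 < w.re) :
    IntegrableOn (fun t : ℝ => (Real.exp (-t) : ℂ) * (t : ℂ) ^ w) (Ioi 0) := by
  have hw' : 0 < (w + 1).re := by rw [Complex.add_re, Complex.one_re]; linarith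
  simpa using Complex.GammaIntegral_convergent hw'

theorem isBigO_exp_neg_mul_cpow_sub_one (w : ℂ) :
    (fun t : ℝ => (Real.exp (-t) : ℂ) * ((t : ℂ) ^ w - 1)) =O[𝓝 1] fun t => t - 1 := by
  have hdiff : DifferentiableAt ℝ (fun t : ℝ => (Real.exp (-t) : ℂ) * ((t : ℂ) ^ w - 1)) 1 := by
    fun_prop (disch := simp)
  simpa using hdiff.isBigO_sub

theorem integrableOn_kurepa_integrand {w : ℂ} (hw : -1 < w.re) :
    IntegrableOn (fun t : ℝ => (Real.exp (-t) : ℂ) * (((t : ℂ) ^ w - 1) / ((t : ℂ) - 1)))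
      (Ioi 0) := by
  have hnum : IntegrableOn (fun t : ℝ => (Real.exp (-t) : ℂ) * ((t : ℂ) ^ w - 1)) (Ioi 0) := by
    have h := (integrableOn_exp_neg_mul_cpow hw).sub
      (integrableOn_exp_neg_mul_cpow (w := 0) (by simp))
    exact h.congr (ae_of_all _ fun t => by simp [mul_sub])
  refine (integrable_inv_sub_smul_of_isBigO hnum (isBigO_exp_neg_mul_cpow_sub_one w)).congr
    (ae_of_all _ fun t => ?_)
  simp only [Complex.real_smul, Complex.ofReal_inv, Complex.ofReal_sub, Complex.ofReal_one]
  ring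

theorem kurepa_add_one {w : ℂ} (hw : -1 < w.re) :
    kurepa (w + 1) = kurepa w + Complex.Gamma (w + 1) := by
  have hw' : 0 < (w + 1).re := by rw [Complex.add_re, Complex.one_re]; linarith
  rw [Complex.Gamma_eq_integral hw', Complex.GammaIntegral, kurepa, kurepa,
    ← integral_add (integrableOn_kurepa_integrand hw) (Complex.GammaIntegral_convergent hw')]
  apply integral_congr_ae
  filter_upwards [ae_restrict_of_ae (Measure.ae_ne volume 1), ae_restrict_mem measurableSet_Ioi]
    with t ht_one ht_pos
  have ht_ne_zero : (t : ℂ) ≠ 0 := Complex.ofReal_ne_zero.2 (ne_of_gt ht_pos)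
  have ht_sub_ne_zero : (t : ℂ) - 1 ≠ 0 := sub_ne_zero.2 (Complex.ofReal_ne_one.2 ht_one)
  rw [Complex.cpow_add _ _ ht_ne_zero, Complex.cpow_one, add_sub_cancel_right]
  field_simp
  ring

theorem kurepa_add_natCast {w : ℂ} (hw : -1 < w.re) (n : ℕ) :
    kurepa (w + n) = kurepa w + ∑ j ∈ Finset.range n, Complex.Gamma (w + (j + 1 : ℕ)) := by
  induction n with
  | zero => simp
  | succ n ih =>
    have hwn : -1 < (w + n).re := by
      rw [Complex.add_re, Complex.natCast_re]
      linarith [n.cast_nonneg (α := ℝ)]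
    rw [Finset.sum_range_succ, ← add_assoc, ← ih, Nat.cast_succ, ← add_assoc, kurepa_add_one hwn]

theorem ascPochhammer_eval_eq_prod_range {R : Type*} [CommSemiring R] (n : ℕ) (r : R) :
    (ascPochhammer R n).eval r = ∏ i ∈ Finset.range n, (r + i) := by
  induction n with
  | zero => simp
  | succ n ih => rw [ascPochhammer_succ_eval, ih, Finset.prod_range_succ]

theorem Gamma_add_natCast_eq_prod_mul_Gamma {w : ℂ} (hw : ∀ k : ℕ, w ≠ -k) (n : ℕ) :
    Complex.Gamma (w + n) = (∏ i ∈ Finset.range n, (w + i)) * Complex.Gamma w := by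
  rw [← ascPochhammer_eval_eq_prod_range, ← Complex.Gamma_add_nat_div_Gamma_eq w hw,
    div_mul_cancel₀ _ (Complex.Gamma_ne_zero hw)]

theorem kurepaP_sub_one_mul_Gamma {n : ℕ} {z : ℂ} (hz : ∀ k : ℕ, z - n ≠ -k) :
    (kurepaP n z - 1) * Complex.Gamma (z - n) =
      ∑ j ∈ Finset.range n, Complex.Gamma (z - n + (j + 1 : ℕ)) := by
  simp only [kurepaP, add_sub_cancel_left, Finset.sum_mul, Gamma_add_natCast_eq_prod_mul_Gamma hz]

theorem ne_neg_natCast_of_neg_one_lt_re {w : ℂ} (hw : -1 < w.re) (hw0 : w ≠ 0) (k : ℕ) :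
    w ≠ -k := by
  rintro rfl
  have hk : k < 1 := by simpa using hw
  simp [Nat.lt_one_iff.1 hk] at hw0

theorem kurepa_eq_kurepa_sub_nat_add_polynomial_mul_Gamma_general
    (n : ℕ) (z : ℂ) (hz : (n : ℝ) - 1 < z.re) (hzn : z ≠ n) :
    kurepa z = kurepa (z - n) + (kurepaP n z - 1) * Complex.Gamma (z - n) := by
  have hre : -1 < (z - n).re := by
    rw [Complex.sub_re, Complex.natCast_re]
    linarith
  rw [kurepaP_sub_one_mul_Gamma (ne_neg_natCast_of_neg_one_lt_re hre (sub_ne_zero.2 hzn)),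
    ← kurepa_add_natCast hre, sub_add_cancel]

/-- For `n ≥ 1` and `Re z > n`, Kurepa's function satisfies
`K(z) = K(z - n) + (P_n(z) - 1) Γ(z - n)`. -/
theorem kurepa_eq_kurepa_sub_nat_add_polynomial_mul_Gamma
    (n : ℕ) (hn : 1 ≤ n) (z : ℂ) (hz : (n : ℝ) < z.re) :
    kurepa z = kurepa (z - n) + (kurepaP n z - 1) * Complex.Gamma (z - n) := by
  exact kurepa_eq_kurepa_sub_nat_add_polynomial_mul_Gamma_general n z (by linarith)
    (by rintro rfl; simp at hz)
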